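/- Let d ≥ 1, let S^d denote the unit sphere in ℝ^{d+1}, and let 0 < α ≤ 1. Then the kernel ψ(ξ,η) := (arccos⟨ξ,η⟩)^α is negative definite on S^d. -/

import Mathlib

/-!
Write `arccos t = (π / 2) * (1 - u)` with `u = (2 / π) * arcsin t`. The argument shows that
`u` is a positive semidefinite function of the Gram matrix `t = ⟪ξ, η⟫`, and that `(1 - u) ^ a` is
conditionally negative definite whenever `u` is positive semidefinite with entries in `[-1, 1]`.

Both steps rest on one fact, `posSemidef_one_sub_rpow_neg`: if `A` is positive semidefinite with
entries in `(-1, 1)` and `b ≥ 0`, then the entrywise power `(1 - A) ^ (-b) = exp (-b log (1 - A))`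
is positive semidefinite, because `-log (1 - x)` and `exp x` have nonnegative Taylor coefficients
and the Schur product theorem applies to every power.

To avoid convergence questions at the endpoints `±1`, the kernels are scaled by `r ∈ [0, 1]` and
differentiated in `r`:
* `∑ αᵢ αⱼ arcsin (r tᵢⱼ)` vanishes at `r = 0` and has derivative
  `∑ αᵢ αⱼ tᵢⱼ (1 - (r tᵢⱼ)²) ^ (-1/2) ≥ 0` (`posSemidef_arcsin`);
* `∑ αᵢ αⱼ (1 - r uᵢⱼ) ^ a` equals `(∑ αᵢ)² = 0` at `r = 0` and has derivative
  `-a ∑ αᵢ αⱼ uᵢⱼ (1 - r uᵢⱼ) ^ (a - 1) ≤ 0` (`sum_one_sub_rpow_nonpos`).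
-/

open Finset
open scoped RealInnerProductSpace

/-- A kernel `ψ : M × M → ℝ` is negative definite if it is symmetric, vanishes on the
diagonal, and `∑ᵢⱼ αᵢ αⱼ ψ(xᵢ,xⱼ) ≤ 0` whenever `∑ᵢ αᵢ = 0`. -/
def IsNegDefKernel {M : Type*} (ψ : M → M → ℝ) : Prop :=
  (∀ x y, ψ x y = ψ y x) ∧ (∀ x, ψ x x = 0) ∧
    ∀ (n : ℕ) (x : Fin n → M) (α : Fin n → ℝ), (∑ i, α i) = 0 →
      ∑ i, ∑ j, α i * α j * ψ (x i) (x j) ≤ 0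

open Matrix in
/-- A real matrix is positive semidefinite iff it is symmetric with nonnegative quadratic form,
the latter written as an explicit double sum. -/
lemma posSemidef_iff_sum {n : ℕ} (A : Matrix (Fin n) (Fin n) ℝ) :
    A.PosSemidef ↔ (∀ i j, A i j = A j i) ∧
      ∀ c : Fin n → ℝ, 0 ≤ ∑ i, ∑ j, c i * c j * A i j := by
  rw [Matrix.posSemidef_iff_dotProduct_mulVec]
  refine and_congr ?_ ?_
  · rw [Matrix.IsHermitian.ext_iff]
    simp only [star_trivial]
    exact ⟨fun h i j => h j i, fun h i j => h j i⟩
  · refine forall_congr' fun c => ?_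
    have : star c ⬝ᵥ (A *ᵥ c) = ∑ i, ∑ j, c i * c j * A i j := by
      simp only [dotProduct, mulVec, Finset.mul_sum, star_trivial]
      exact Finset.sum_congr rfl fun i _ => Finset.sum_congr rfl fun j _ => by ring
    rw [this]

/-- Schur product theorem in entrywise form. -/
lemma posSemidef_mul {n : ℕ} {A B : Matrix (Fin n) (Fin n) ℝ} (hA : A.PosSemidef)
    (hB : B.PosSemidef) : (Matrix.of fun i j => A i j * B i j).PosSemidef :=
  hA.hadamard hB

lemma posSemidef_pow {n : ℕ} {A : Matrix (Fin n) (Fin n) ℝ} (hA : A.PosSemidef) (k : ℕ) :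
    (Matrix.of fun i j => A i j ^ k).PosSemidef := by
  induction k with
  | zero =>
    rw [posSemidef_iff_sum]
    refine ⟨fun i j => by simp, fun c => ?_⟩
    have : ∑ i, ∑ j, c i * c j * (Matrix.of fun i j => A i j ^ 0) i j = (∑ i, c i) ^ 2 := by
      simp [sq, Finset.sum_mul_sum]
    rw [this]
    positivity
  | succ k ih =>
    simp only [pow_succ]
    exact posSemidef_mul ih hA

/-- A power series with nonnegative coefficients, applied entrywise, preserves positive
semidefiniteness. The exponents `e k` are arbitrary so that shifted series need no reindexing. -/
lemma posSemidef_of_hasSum {n : ℕ} {A B : Matrix (Fin n) (Fin n) ℝ} (hA : A.PosSemidef)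
    (c : ℕ → ℝ) (e : ℕ → ℕ) (hc : ∀ k, 0 ≤ c k)
    (h : ∀ i j, HasSum (fun k => c k * A i j ^ e k) (B i j)) : B.PosSemidef := by
  rw [posSemidef_iff_sum]
  constructor
  · intro i j
    have h1 := h i j
    rw [((posSemidef_iff_sum A).1 hA).1 i j] at h1
    exact h1.unique (h j i)
  · intro v
    have h1 : HasSum (fun k => ∑ i, ∑ j, v i * v j * (c k * A i j ^ e k))
        (∑ i, ∑ j, v i * v j * B i j) :=
      hasSum_sum fun i _ => hasSum_sum fun j _ => (h i j).mul_left _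
    refine h1.nonneg fun k => ?_
    have h2 := mul_nonneg (hc k) (((posSemidef_iff_sum _).1 (posSemidef_pow hA (e k))).2 v)
    simp only [Matrix.of_apply, Finset.mul_sum] at h2
    refine h2.trans_eq ?_
    exact Finset.sum_congr rfl fun i _ => Finset.sum_congr rfl fun j _ => by ring

lemma posSemidef_one_sub_rpow_neg {n : ℕ} {A : Matrix (Fin n) (Fin n) ℝ} (hA : A.PosSemidef)
    (h1 : ∀ i j, |A i j| < 1) {b : ℝ} (hb : 0 ≤ b) :
    (Matrix.of fun i j => (1 - A i j) ^ (-b)).PosSemidef := by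
  have hlog : (Matrix.of fun i j => b * -Real.log (1 - A i j)).PosSemidef := by
    refine posSemidef_of_hasSum hA (fun k => b / (k + 1)) (fun k => k + 1)
      (fun k => by positivity) fun i j => ?_
    have h2 := (Real.hasSum_pow_div_log_of_abs_lt_one (h1 i j)).mul_left b
    convert! h2 using 1
    ext k
    ring
  refine posSemidef_of_hasSum hlog (fun k => 1 / (k.factorial : ℝ)) id
    (fun k => by positivity) fun i j => ?_
  have hpos : 0 < 1 - A i j := by linarith [(abs_lt.1 (h1 i j)).2]
  have h2 := NormedSpace.expSeries_div_hasSum_exp (b * -Real.log (1 - A i j))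
  rw [← Real.exp_eq_exp_ℝ] at h2
  simp only [Matrix.of_apply, id]
  rw [Real.rpow_def_of_pos hpos, show Real.log (1 - A i j) * -b = b * -Real.log (1 - A i j) by ring]
  convert! h2 using 1
  ext k
  ring

/-- A function on `[0, 1]` that is continuous there and has nonnegative derivative inside
satisfies `F 0 ≤ F 1`. -/
lemma le_of_hasDerivAt_nonneg {F F' : ℝ → ℝ} (hF : ContinuousOn F (Set.Icc 0 1))
    (hd : ∀ r ∈ Set.Ioo (0 : ℝ) 1, HasDerivAt F (F' r) r)
    (hn : ∀ r ∈ Set.Ioo (0 : ℝ) 1, 0 ≤ F' r) : F 0 ≤ F 1 := by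
  have hm : MonotoneOn F (Set.Icc 0 1) := by
    refine monotoneOn_of_deriv_nonneg (convex_Icc 0 1) hF ?_ ?_
    · rw [interior_Icc]
      exact fun r hr => (hd r hr).differentiableAt.differentiableWithinAt
    · rw [interior_Icc]
      intro r hr
      rw [(hd r hr).deriv]
      exact hn r hr
  exact hm (by simp) (by simp) zero_le_one

lemma abs_mul_lt_one_of_Ioo {r t : ℝ} (hr : r ∈ Set.Ioo (0 : ℝ) 1) (ht : |t| ≤ 1) :
    |r * t| < 1 := by
  rw [abs_mul, abs_of_pos hr.1]
  nlinarith [hr.1, hr.2, abs_nonneg t]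

lemma posSemidef_arcsin {n : ℕ} {A : Matrix (Fin n) (Fin n) ℝ} (hA : A.PosSemidef)
    (h1 : ∀ i j, |A i j| ≤ 1) : (Matrix.of fun i j => Real.arcsin (A i j)).PosSemidef := by
  rw [posSemidef_iff_sum]
  refine ⟨fun i j => by simp [((posSemidef_iff_sum A).1 hA).1 i j], fun c => ?_⟩
  have key := le_of_hasDerivAt_nonneg
    (F := fun r => ∑ i, ∑ j, c i * c j * Real.arcsin (r * A i j))
    (F' := fun r => ∑ i, ∑ j, c i * c j * (A i j * (1 - (r * A i j) ^ 2) ^ (-(1 / 2 : ℝ))))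
    ?_ ?_ ?_
  · simpa using key
  · refine Continuous.continuousOn ?_
    refine continuous_finsetSum _ fun i _ => continuous_finsetSum _ fun j _ => ?_
    exact continuous_const.mul (Real.continuous_arcsin.comp (continuous_id.mul continuous_const))
  · intro r hr
    refine HasDerivAt.fun_sum fun i _ => HasDerivAt.fun_sum fun j _ => ?_
    refine HasDerivAt.const_mul _ ?_
    have hlt := abs_lt.1 (abs_mul_lt_one_of_Ioo hr (h1 i j))
    have h2 := (Real.hasDerivAt_arcsin hlt.1.ne' hlt.2.ne).comp r
      ((hasDerivAt_id r).mul_const (A i j))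
    have hpos : 0 ≤ 1 - (r * A i j) ^ 2 := by nlinarith [hlt.1, hlt.2]
    refine h2.congr_deriv ?_
    rw [Real.rpow_neg hpos, ← Real.sqrt_eq_rpow]
    ring
  · intro r hr
    have hsq : (Matrix.of fun i j => (r * A i j) ^ 2).PosSemidef :=
      posSemidef_pow (hA.smul hr.1.le) 2
    have hlt : ∀ i j, |(Matrix.of fun i j => (r * A i j) ^ 2) i j| < 1 := fun i j => by
      have := abs_mul_lt_one_of_Ioo hr (h1 i j)
      simp only [Matrix.of_apply, abs_pow]
      exact pow_lt_one₀ (abs_nonneg _) this two_ne_zero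
    have h3 := posSemidef_mul hA
      (posSemidef_one_sub_rpow_neg hsq hlt (b := 1 / 2) (by norm_num))
    exact ((posSemidef_iff_sum _).1 h3).2 c

lemma sum_one_sub_rpow_nonpos {n : ℕ} {U : Matrix (Fin n) (Fin n) ℝ} (hU : U.PosSemidef)
    (h1 : ∀ i j, |U i j| ≤ 1) {a : ℝ} (ha : 0 < a) (ha1 : a ≤ 1) (c : Fin n → ℝ)
    (hc : ∑ i, c i = 0) : ∑ i, ∑ j, c i * c j * (1 - U i j) ^ a ≤ 0 := by
  have key := le_of_hasDerivAt_nonneg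
    (F := fun r => ∑ i, ∑ j, c i * c j * -(1 - r * U i j) ^ a)
    (F' := fun r => ∑ i, ∑ j, c i * c j * (a * (U i j * (1 - r * U i j) ^ (-(1 - a)))))
    ?_ ?_ ?_
  · have h0 : ∑ i, ∑ j, c i * c j = 0 := by
      rw [← Finset.sum_mul_sum, hc, zero_mul]
    simp only [zero_mul, sub_zero, Real.one_rpow, one_mul, mul_neg, mul_one,
      Finset.sum_neg_distrib, h0, neg_zero] at key
    linarith
  · refine Continuous.continuousOn ?_
    refine continuous_finsetSum _ fun i _ => continuous_finsetSum _ fun j _ => ?_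
    refine continuous_const.mul (Continuous.neg ?_)
    exact (continuous_const.sub (continuous_id.mul continuous_const)).rpow_const
      fun _ => Or.inr ha.le
  · intro r hr
    refine HasDerivAt.fun_sum fun i _ => HasDerivAt.fun_sum fun j _ => ?_
    refine HasDerivAt.const_mul _ ?_
    have hlt := abs_lt.1 (abs_mul_lt_one_of_Ioo hr (h1 i j))
    have h2 := ((((hasDerivAt_id r).mul_const (U i j)).const_sub 1).rpow_const (p := a)
      (Or.inl (by simp only [id]; linarith [hlt.2]))).neg
    refine h2.congr_deriv ?_
    rw [neg_sub]
    simp only [id]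
    ring
  · intro r hr
    have h3 := posSemidef_mul hU (posSemidef_one_sub_rpow_neg (hU.smul hr.1.le)
      (fun i j => abs_mul_lt_one_of_Ioo hr (h1 i j)) (b := 1 - a) (by linarith))
    exact ((posSemidef_iff_sum _).1 (h3.smul ha.le)).2 c

theorem sphere_geodesic_pow_negDef (d : ℕ) (hd : 1 ≤ d) (a : ℝ) (ha : 0 < a) (ha1 : a ≤ 1) :
    IsNegDefKernel
      (fun ξ η : Metric.sphere (0 : EuclideanSpace ℝ (Fin (d + 1))) 1 =>
        (Real.arccos ⟪(ξ : EuclideanSpace ℝ (Fin (d + 1))),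
          (η : EuclideanSpace ℝ (Fin (d + 1)))⟫) ^ a) := by
  refine ⟨fun x y => ?_, fun x => ?_, fun n x c hc => ?_⟩
  · simp only [real_inner_comm]
  · have : ‖(x : EuclideanSpace ℝ (Fin (d + 1)))‖ = 1 := by simp
    simp only [real_inner_self_eq_norm_sq, this, one_pow, Real.arccos_one]
    exact Real.zero_rpow ha.ne'
  · have hG := Matrix.posSemidef_gram ℝ (fun i => (x i : EuclideanSpace ℝ (Fin (d + 1))))
    have hG1 : ∀ i j, |Matrix.gram ℝ (fun i => (x i : EuclideanSpace ℝ (Fin (d + 1)))) i j| ≤ 1 :=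
      fun i j => by
        have := abs_real_inner_le_norm (x i : EuclideanSpace ℝ (Fin (d + 1))) (x j)
        simpa using this
    have hpi := Real.pi_pos
    have hU := (posSemidef_arcsin hG hG1).smul (a := 2 / Real.pi) (by positivity)
    have key := sum_one_sub_rpow_nonpos hU (fun i j => ?_) ha ha1 c hc
    · have h2 := mul_nonpos_of_nonneg_of_nonpos
        (Real.rpow_nonneg (by positivity : 0 ≤ Real.pi / 2) a) key
      refine le_of_eq_of_le ?_ h2
      simp only [Finset.mul_sum]
      refine Finset.sum_congr rfl fun i _ => Finset.sum_congr rfl fun j _ => ?_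
      simp only [Matrix.smul_apply, Matrix.of_apply, Matrix.gram_apply, smul_eq_mul]
      set t := ⟪(x i : EuclideanSpace ℝ (Fin (d + 1))), (x j : EuclideanSpace ℝ (Fin (d + 1)))⟫
      have h3 : Real.arccos t = Real.pi / 2 * (1 - 2 / Real.pi * Real.arcsin t) := by
        rw [Real.arccos]
        field_simp
      have h4 : 0 ≤ 1 - 2 / Real.pi * Real.arcsin t := by
        have := Real.arccos_nonneg t
        rw [h3] at this
        exact nonneg_of_mul_nonneg_right this (by positivity)
      rw [h3, Real.mul_rpow (by positivity) h4]
      ring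
    · simp only [Matrix.smul_apply, Matrix.of_apply, smul_eq_mul]
      rw [abs_mul, abs_of_pos (by positivity), div_mul_eq_mul_div, div_le_one hpi]
      have := abs_le.2 ⟨Real.neg_pi_div_two_le_arcsin _, Real.arcsin_le_pi_div_two
        (Matrix.gram ℝ (fun i => (x i : EuclideanSpace ℝ (Fin (d + 1)))) i j)⟩
      linarith
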